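/- Let V be a vertex operator algebra with V = ⊕_{n∈ℕ} V_{(n)} and V_{(0)} = ℂ1, and let W₁, W₂, W₃ be irreducible V-modules such that dim W₁/B(W₁) < ∞. Then the fusion rule dim I(W₃; W₁, W₂) is finite. -/

import Mathlib

noncomputable section

/-- The generalized binomial coefficient `C(m, i)` for `m ∈ ℤ`, `i ∈ ℕ`,
as a complex number: `m(m-1)⋯(m-i+1)/i!`. -/
def cchoose (m : ℤ) (i : ℕ) : ℂ :=
  (∏ j ∈ Finset.range i, ((m : ℂ) - (j : ℂ))) / (Nat.factorial i : ℂ)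

/-- A vertex operator algebra `V = ⊕ₙ V₍ₙ₎` over `ℂ`.  The vertex operator map is
recorded through its modes `op u n v = uₙ v` (so `Y(u,x)v = Σₙ uₙv x^{-n-1}`), with
vacuum `one`, conformal vector `omega` (with `L(k) = ω_{k+1}`), central charge `cc`,
weight grading `wtSpace` with projections `proj`.  The Jacobi identity is recorded in
the equivalent form of the Borcherds identity on modes. -/
structure VOA where
  carrier : Type
  [grp : AddCommGroup carrier]
  [mdl : Module ℂ carrier]
  op : carrier → ℤ → carrier → carrier
  one : carrier
  omega : carrier
  wtSpace : ℤ → Submodule ℂ carrier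
  proj : ℤ → carrier → carrier
  cc : ℂ
  op_linear_left : ∀ (n : ℤ) (w : carrier), IsLinearMap ℂ fun u => op u n w
  op_linear_right : ∀ (u : carrier) (n : ℤ), IsLinearMap ℂ (op u n)
  trunc : ∀ u v : carrier, ∃ N : ℤ, ∀ n : ℤ, N ≤ n → op u n v = 0
  one_op : ∀ (n : ℤ) (v : carrier), op one n v = if n = -1 then v else 0
  create_nonneg : ∀ (v : carrier) (n : ℤ), 0 ≤ n → op v n one = 0
  create : ∀ v : carrier, op v (-1) one = v
  borcherds : ∀ (u v w : carrier) (l m n : ℤ),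
    (∑ᶠ i : ℕ, cchoose m i • op (op u (l + (i : ℤ)) v) (m + n - (i : ℤ)) w)
      = ∑ᶠ i : ℕ, ((-1 : ℂ) ^ i * cchoose l i) •
          (op u (l + m - (i : ℤ)) (op v (n + (i : ℤ)) w)
            - ((-1 : ℂ) ^ l) • op v (l + n - (i : ℤ)) (op u (m + (i : ℤ)) w))
  proj_linear : ∀ n : ℤ, IsLinearMap ℂ (proj n)
  proj_mem : ∀ (n : ℤ) (v : carrier), proj n v ∈ wtSpace n
  proj_eq : ∀ n : ℤ, ∀ v ∈ wtSpace n, proj n v = v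
  proj_ne : ∀ m n : ℤ, m ≠ n → ∀ v ∈ wtSpace m, proj n v = 0
  proj_finite : ∀ v : carrier, (Function.support fun n => proj n v).Finite
  proj_sum : ∀ v : carrier, (∑ᶠ n : ℤ, proj n v) = v
  fd : ∀ n : ℤ, FiniteDimensional ℂ (wtSpace n)
  lower_trunc : ∃ N : ℤ, ∀ n : ℤ, n < N → wtSpace n = ⊥
  one_wt : one ∈ wtSpace 0
  omega_wt : omega ∈ wtSpace 2
  op_wt : ∀ k m n : ℤ, ∀ u ∈ wtSpace k, ∀ v ∈ wtSpace m, op u n v ∈ wtSpace (k + m - n - 1)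
  L_zero : ∀ n : ℤ, ∀ v ∈ wtSpace n, op omega 1 v = (n : ℂ) • v
  L_neg_one : ∀ (u : carrier) (n : ℤ) (w : carrier),
    op (op omega 0 u) n w = (-(n : ℂ)) • op u (n - 1) w
  virasoro : ∀ (m n : ℤ) (v : carrier),
    op omega (m + 1) (op omega (n + 1) v) - op omega (n + 1) (op omega (m + 1) v)
      = ((m : ℂ) - (n : ℂ)) • op omega (m + n + 1) v
        + (if m + n = 0 then (((m : ℂ) ^ 3 - (m : ℂ)) / 12) * cc else 0) • v

attribute [instance] VOA.grp VOA.mdl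

namespace VOA

variable (V : VOA)

/-- The Virasoro operator `L(k) = ω_{k+1}`. -/
def L (k : ℤ) (v : V.carrier) : V.carrier := V.op V.omega (k + 1) v

/-- The positive-weight part `V₊ = ⊕_{n ≥ 1} V₍ₙ₎`. -/
def pos : Submodule ℂ V.carrier := ⨆ (n : ℤ) (_ : 1 ≤ n), V.wtSpace n

/-- Zhu's subspace `C₂(V) = span{u₋₂v : u, v ∈ V}`. -/
def C2 : Submodule ℂ V.carrier :=
  Submodule.span ℂ {x : V.carrier | ∃ u v : V.carrier, x = V.op u (-2) v}

/-- The subspace `C₁(V) = span(v₋₁V₊ (v ∈ V₊) together with L(-1)V)`. -/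
def C1 : Submodule ℂ V.carrier :=
  Submodule.span ℂ
    ({x : V.carrier | ∃ u ∈ V.pos, ∃ v ∈ V.pos, x = V.op u (-1) v}
      ∪ {x : V.carrier | ∃ v : V.carrier, x = V.op V.omega 0 v})

/-- Iterated application of modes: `iterApply [(u¹,n₁),…,(uʳ,n_r)] w = u¹_{n₁} ⋯ uʳ_{n_r} w`. -/
def iterApply : List (V.carrier × ℤ) → V.carrier → V.carrier
  | [], w => w
  | p :: l, w => V.op p.1 p.2 (iterApply l w)

/-- `U ⊆ V` generates `V` as a vertex operator algebra:  `V` is linearly spanned by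
the elements `u¹_{n₁} ⋯ uʳ_{n_r} 1` with `uⁱ ∈ U`, `n_i ∈ ℤ`. -/
def generates (U : Set V.carrier) : Prop :=
  Submodule.span ℂ {x : V.carrier | ∃ l : List (V.carrier × ℤ),
    (∀ p ∈ l, p.1 ∈ U) ∧ x = V.iterApply l V.one} = ⊤

/-- `V` is finitely generated as a vertex operator algebra. -/
def FinitelyGenerated : Prop := ∃ S : Finset V.carrier, V.generates ↑S

end VOA

/-- A weak `V`-module: all axioms of a module (truncation, vacuum, Jacobi identity in
Borcherds form) except those involving gradings. -/
structure WeakModule (V : VOA) where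
  carrier : Type
  [grp : AddCommGroup carrier]
  [mdl : Module ℂ carrier]
  op : V.carrier → ℤ → carrier → carrier
  op_linear_left : ∀ (n : ℤ) (w : carrier), IsLinearMap ℂ fun u => op u n w
  op_linear_right : ∀ (u : V.carrier) (n : ℤ), IsLinearMap ℂ (op u n)
  trunc : ∀ (u : V.carrier) (w : carrier), ∃ N : ℤ, ∀ n : ℤ, N ≤ n → op u n w = 0
  one_op : ∀ (n : ℤ) (w : carrier), op V.one n w = if n = -1 then w else 0
  borcherds : ∀ (u v : V.carrier) (w : carrier) (l m n : ℤ),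
    (∑ᶠ i : ℕ, cchoose m i • op (V.op u (l + (i : ℤ)) v) (m + n - (i : ℤ)) w)
      = ∑ᶠ i : ℕ, ((-1 : ℂ) ^ i * cchoose l i) •
          (op u (l + m - (i : ℤ)) (op v (n + (i : ℤ)) w)
            - ((-1 : ℂ) ^ l) • op v (l + n - (i : ℤ)) (op u (m + (i : ℤ)) w))

attribute [instance] WeakModule.grp WeakModule.mdl

namespace WeakModule

variable {V : VOA} (W : WeakModule V)

/-- `L(0)` acting on a weak module, as a linear map. -/
def L0 : W.carrier →ₗ[ℂ] W.carrier := IsLinearMap.mk' _ (W.op_linear_right V.omega 1)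

/-- The `L(0)`-eigenspace of eigenvalue `h`. -/
def eig (h : ℂ) : Submodule ℂ W.carrier :=
  LinearMap.ker (W.L0 - h • (LinearMap.id : W.carrier →ₗ[ℂ] W.carrier))

/-- The coefficient `v*ₙ` of the adjoint vertex operator
`⟨Y*(v,x)α, w⟩ = ⟨α, Y(e^{xL(1)}(-x^{-2})^{L(0)}v, x^{-1})w⟩` acting on the full dual
space: for `v` homogeneous of weight `h`,
`(v*ₙ α)(w) = (-1)^h Σ_{i≥0} (1/i!) α((L(1)^i v)_{2h-n-i-2} w)`, extended to general
`v` via the weight-space projections. -/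
def dmode (v : V.carrier) (n : ℤ) (α : W.carrier → ℂ) (w : W.carrier) : ℂ :=
  ∑ᶠ h : ℤ, ∑ᶠ i : ℕ,
    ((-1 : ℂ) ^ h / (Nat.factorial i : ℂ)) *
      α (W.op ((V.L 1)^[i] (V.proj h v)) (2 * h - n - (i : ℤ) - 2) w)

/-- `D(W) ⊆ W*`: the linear functionals `α` on `W` such that for every `v ∈ V`,
`Y*(v,x)α ∈ W*((x))`, i.e. `v*ₙ α = 0` for `n` sufficiently large. -/
def DW : Set (W.carrier → ℂ) :=
  {α | IsLinearMap ℂ α ∧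
    ∀ v : V.carrier, ∃ N : ℤ, ∀ n : ℤ, N ≤ n → ∀ w : W.carrier, W.dmode v n α w = 0}

/-- A subspace stable under all modes of all vertex operators, i.e. a `V`-submodule. -/
def IsStable (S : Submodule ℂ W.carrier) : Prop :=
  ∀ (v : V.carrier) (n : ℤ), ∀ m ∈ S, W.op v n m ∈ S

/-- An irreducible (nonzero, no proper nonzero stable subspaces) `V`-submodule. -/
def IsIrreducibleSub (S : Submodule ℂ W.carrier) : Prop :=
  S ≠ ⊥ ∧ W.IsStable S ∧
    ∀ T : Submodule ℂ W.carrier, W.IsStable T → T ≤ S → T = ⊥ ∨ T = S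

/-- A stable subspace which is an ordinary module: `L(0)` acts semisimply on it with
finite-dimensional eigenspaces, and for each `h` the eigenvalues `h + m` do not occur
for `m` a sufficiently negative integer. -/
def IsOrdinarySub (S : Submodule ℂ W.carrier) : Prop :=
  S ≤ (⨆ h : ℂ, W.eig h ⊓ S) ∧ (∀ h : ℂ, FiniteDimensional ℂ ↥(W.eig h ⊓ S)) ∧
    ∀ h : ℂ, ∃ N : ℤ, ∀ m : ℤ, m ≤ N → W.eig (h + (m : ℂ)) ⊓ S = ⊥

/-- The weak module `W` is irreducible. -/
def IsIrreducible : Prop :=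
  (⊥ : Submodule ℂ W.carrier) ≠ ⊤ ∧
    ∀ S : Submodule ℂ W.carrier, W.IsStable S → S = ⊥ ∨ S = ⊤

/-- `Cₙ(W) = span{v₋ₙw : v ∈ V, w ∈ W}`. -/
def Cn (n : ℤ) : Submodule ℂ W.carrier :=
  Submodule.span ℂ {x : W.carrier | ∃ (v : V.carrier) (w : W.carrier), x = W.op v (-n) w}

/-- `B(W) = span(u₋₁W (u ∈ V₊) together with v₀W (v homogeneous, wt v ≥ 2))`. -/
def BW : Submodule ℂ W.carrier :=
  Submodule.span ℂ
    ({x : W.carrier | ∃ v ∈ V.pos, ∃ w : W.carrier, x = W.op v (-1) w}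
      ∪ {x : W.carrier | ∃ k : ℤ, 2 ≤ k ∧ ∃ v ∈ V.wtSpace k, ∃ w : W.carrier, x = W.op v 0 w})

/-- Zhu's subspace `O(W) = span{Σ_{i≥0} C(wt v, i) v_{i-2} w}` so that `A(W) = W/O(W)`. -/
def OW : Submodule ℂ W.carrier :=
  Submodule.span ℂ
    {x : W.carrier | ∃ (k : ℤ) (v : V.carrier), v ∈ V.wtSpace k ∧
      ∃ w : W.carrier, x = ∑ᶠ i : ℕ, cchoose k i • W.op v ((i : ℤ) - 2) w}

/-- A subspace `T ⊇ O(W)` of `W` is closed under the Frenkel–Zhu left and right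
`A(V)`-actions `v * w = Σᵢ C(wt v, i) v_{i-1} w` and `w * v = Σᵢ C(wt v - 1, i) v_{i-1} w`;
for `T ⊇ O(W)` this expresses that `T/O(W)` is an `A(V)`-sub-bimodule of `A(W)`. -/
def BimoduleClosed (T : Submodule ℂ W.carrier) : Prop :=
  ∀ k : ℤ, ∀ v ∈ V.wtSpace k, ∀ w ∈ T,
    (∑ᶠ i : ℕ, cchoose k i • W.op v ((i : ℤ) - 1) w) ∈ T ∧
    (∑ᶠ i : ℕ, cchoose (k - 1) i • W.op v ((i : ℤ) - 1) w) ∈ T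

/-- Equivalence (isomorphism) of weak modules. -/
def Equiv (M N : WeakModule V) : Prop :=
  ∃ e : M.carrier ≃ₗ[ℂ] N.carrier,
    ∀ (v : V.carrier) (n : ℤ) (w : M.carrier), e (M.op v n w) = N.op v n (e w)

end WeakModule

/-- `V` is of class 𝒜: `L(0)` acts semisimply on every weak `V`-module. -/
def VOA.classA (V : VOA) : Prop :=
  ∀ M : WeakModule V, (⨆ h : ℂ, M.eig h) = ⊤

/-- `V` is regular: every weak `V`-module is a direct sum of irreducible ordinary
`V`-modules. -/
def VOA.regular (V : VOA) : Prop :=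
  ∀ M : WeakModule V, ∃ (ι : Type) (S : ι → Submodule ℂ M.carrier),
    (∀ i, M.IsIrreducibleSub (S i) ∧ M.IsOrdinarySub (S i)) ∧
    (∀ i, Disjoint (S i) (⨆ (j : ι) (_ : j ≠ i), S j)) ∧ (⨆ i, S i) = ⊤

/-- A generalized `V`-module: a weak module with a semisimple `L(0)`-action, graded by
the `L(0)`-eigenvalues, with weight-space projections `projW`. -/
structure GenModule (V : VOA) extends WeakModule V where
  wt : ℂ → Submodule ℂ carrier
  projW : ℂ → carrier → carrier
  projW_linear : ∀ h : ℂ, IsLinearMap ℂ (projW h)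
  projW_mem : ∀ (h : ℂ) (w : carrier), projW h w ∈ wt h
  projW_eq : ∀ h : ℂ, ∀ w ∈ wt h, projW h w = w
  projW_ne : ∀ g h : ℂ, g ≠ h → ∀ w ∈ wt g, projW h w = 0
  projW_finite : ∀ w : carrier, (Function.support fun h => projW h w).Finite
  projW_sum : ∀ w : carrier, (∑ᶠ h : ℂ, projW h w) = w
  wt_L0 : ∀ h : ℂ, ∀ w ∈ wt h, op V.omega 1 w = h • w
  wt_op : ∀ k : ℤ, ∀ v ∈ V.wtSpace k, ∀ (h : ℂ) (n : ℤ), ∀ w ∈ wt h,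
    op v n w ∈ wt (h + (k : ℂ) - (n : ℂ) - 1)

/-- An ordinary `V`-module: a generalized module whose weight spaces are
finite-dimensional and whose weights are truncated from below in each coset `h + ℤ`. -/
structure OrdModule (V : VOA) extends GenModule V where
  wt_fd : ∀ h : ℂ, FiniteDimensional ℂ ↥(wt h)
  wt_lower : ∀ h : ℂ, ∃ N : ℤ, ∀ m : ℤ, m ≤ N → wt (h + (m : ℂ)) = ⊥

namespace GenModule

variable {V : VOA} (W : GenModule V)

/-- `W₊ = ⊕_{Re h > 0} W₍ₕ₎`. -/
def posW : Submodule ℂ W.carrier := ⨆ (h : ℂ) (_ : 0 < h.re), W.wt h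

/-- `C₁(W) = span(v₋₁W₊ (v ∈ V₊) together with L(-1)W)`. -/
def C1W : Submodule ℂ W.carrier :=
  Submodule.span ℂ
    ({x : W.carrier | ∃ v ∈ V.pos, ∃ w ∈ W.posW, x = W.op v (-1) w}
      ∪ {x : W.carrier | ∃ w : W.carrier, x = W.op V.omega 0 w})

/-- The restricted dual `W' = ⊕ₕ W₍ₕ₎* ⊆ W*`: the linear functionals vanishing on all
but finitely many weight spaces. -/
def restrictedDual : Set (W.carrier → ℂ) :=
  {α | IsLinearMap ℂ α ∧ {h : ℂ | ∃ w ∈ W.wt h, α w ≠ 0}.Finite}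

end GenModule

/-- `D(W)⁰`: the sum of the `L(0)`-eigenspaces of the weak module `D(W) ⊆ W*`, where
`L*(0) = ω*₁` acts on `α ∈ W*` by `(L*(0)α)(w) = α(L(0)w)`. -/
def OrdModule.DW0 {V : VOA} (W : OrdModule V) : Set (W.carrier → ℂ) :=
  {α | ∃ (S : Finset ℂ) (f : ℂ → (W.carrier → ℂ)),
    (∀ h ∈ S, f h ∈ W.toWeakModule.DW ∧
      ∀ w : W.carrier, f h (W.op V.omega 1 w) = h * f h w) ∧
    α = ∑ h ∈ S, f h}

/-- An ℕ-gradable weak `V`-module: a weak module with an ℕ-grading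
`W = ⊕_{n∈ℕ} W(n)` with `v_m W(n) ⊆ W(wt v + n - m - 1)` (graded pieces of negative
index are zero). -/
structure NGradedModule (V : VOA) extends WeakModule V where
  gr : ℤ → Submodule ℂ carrier
  gr_neg : ∀ n : ℤ, n < 0 → gr n = ⊥
  gr_sup : (⨆ n : ℤ, gr n) = ⊤
  gr_indep : ∀ n : ℤ, Disjoint (gr n) (⨆ (m : ℤ) (_ : m ≠ n), gr m)
  gr_op : ∀ k : ℤ, ∀ v ∈ V.wtSpace k, ∀ m n : ℤ, ∀ w ∈ gr n,
    op v m w ∈ gr (k + n - m - 1)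

/-- An intertwining operator of type `(W₃; W₁ W₂)` in the sense of
Frenkel–Huang–Lepowsky, recorded through its complex-indexed modes
`I w₁ h w₂ = (w₁)ₕ w₂` (so `Y(w₁,x)w₂ = Σ_{h∈ℂ} (w₁)ₕ w₂ x^{-h-1}`):
linearity, truncation, the `L(-1)`-derivative property, and the Jacobi identity in
component (Borcherds) form. -/
def IsIntertwiner {V : VOA} (W1 W2 W3 : OrdModule V)
    (I : W1.carrier → ℂ → W2.carrier → W3.carrier) : Prop :=
  (∀ (h : ℂ) (w2 : W2.carrier), IsLinearMap ℂ fun w1 => I w1 h w2) ∧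
  (∀ (w1 : W1.carrier) (h : ℂ), IsLinearMap ℂ (I w1 h)) ∧
  (∀ (w1 : W1.carrier) (w2 : W2.carrier) (h : ℂ),
    ∃ N : ℤ, ∀ n : ℤ, N ≤ n → I w1 (h + (n : ℂ)) w2 = 0) ∧
  (∀ (w1 : W1.carrier) (h : ℂ) (w2 : W2.carrier),
    I (W1.op V.omega 0 w1) h w2 = (-h) • I w1 (h - 1) w2) ∧
  (∀ (u : V.carrier) (w1 : W1.carrier) (w2 : W2.carrier) (l m : ℤ) (h : ℂ),
    (∑ᶠ i : ℕ, cchoose m i • I (W1.op u (l + (i : ℤ)) w1) ((m : ℂ) + h - (i : ℂ)) w2)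
      = ∑ᶠ i : ℕ, ((-1 : ℂ) ^ i * cchoose l i) •
          (W3.op u (l + m - (i : ℤ)) (I w1 (h + (i : ℂ)) w2)
            - ((-1 : ℂ) ^ l) • I w1 ((l : ℂ) + h - (i : ℂ)) (W2.op u (m + (i : ℤ)) w2)))

/-- The fusion rule `dim I(W₃; W₁W₂)` is finite: the space of intertwining operators of
the indicated type is finite-dimensional. -/
def FusionFinite {V : VOA} (W1 W2 W3 : OrdModule V) : Prop :=
  FiniteDimensional ℂ
    ↥(Submodule.span ℂ {I : W1.carrier → ℂ → W2.carrier → W3.carrier |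
        IsIntertwiner W1 W2 W3 I})

end

/-!
Let `h₂`, `h₃` be lowest weights of `W₂`, `W₃` and let `π` be the projection of `W₃` onto its
weight space of weight `h₃`. An intertwining operator is determined by the coefficients
`π ((w)ₕ y)` with `w ∈ W₁` and `y` of weight `h₂`: the vector `y` generates `W₂`, the commutator
formula moves a mode `uₙ` from `y` to the left of `(w)ₕ`, where `π` annihilates it unless it lowers
weights, and every nonzero vector of `W₃` has a descendant which `π` does not annihilate.

The vectors `w` all of whose coefficients vanish form a subspace `K` of `W₁`. If `w` and all `uⱼ w`
with `j ≥ 0` lie in `K`, then so does `u₋₁ w`, by the associativity formula; and if `w` and all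
`uⱼ w` with `j ≥ 1` lie in `K`, then so does `u₀ w`, by the commutator formula for the mode
`u_{wt u - 1}`, which preserves weights. By induction on weights `K` is everything as soon as it
contains weight spaces spanning `W₁` modulo `B(W₁)`. Finitely many weight spaces `W₁₍ₐ₎` suffice for
this, and the coefficients on them form an element of the finite-dimensional space
`⊕ₐ Hom(W₁₍ₐ₎ ⊗ W₂₍ₕ₂₎, W₃₍ₕ₃₎)`.
-/

theorem cchoose_zero_right (m : ℤ) : cchoose m 0 = 1 := by simp [cchoose]

theorem cchoose_one_one : cchoose 1 1 = 1 := by simp [cchoose]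

theorem cchoose_natCast_of_lt {m i : ℕ} (h : m < i) : cchoose m i = 0 := by
  rw [cchoose, Finset.prod_eq_zero (Finset.mem_range.mpr h) (by simp), zero_div]

theorem cchoose_zero_left {i : ℕ} (h : i ≠ 0) : cchoose 0 i = 0 :=
  mod_cast cchoose_natCast_of_lt (Nat.pos_of_ne_zero h)

theorem cchoose_one_left {i : ℕ} (h : 2 ≤ i) : cchoose 1 i = 0 :=
  mod_cast cchoose_natCast_of_lt h

theorem finsum_mem_of_forall_mem {M S : Type*} {ι : Sort*} [AddCommMonoid M] [SetLike S M]
    [AddSubmonoidClass S M] {K : S} {f : ι → M} (hf : ∀ i, f i ∈ K) : ∑ᶠ i, f i ∈ K :=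
  finsum_induction (· ∈ K) (zero_mem K) (fun _ _ => add_mem) hf

theorem mem_of_finsum_mem {M S ι : Type*} [AddCommGroup M] [SetLike S M] [AddSubgroupClass S M]
    {K : S} {f : ι → M} (hfin : (Function.support f).Finite) (hsum : ∑ᶠ i, f i ∈ K) (a : ι)
    (hf : ∀ i ≠ a, f i ∈ K) : f a ∈ K := by
  rw [eq_sub_of_add_eq (add_finsum_cond_ne a hfin)]
  exact sub_mem hsum (finsum_mem_of_forall_mem fun i => finsum_mem_of_forall_mem (hf i))

theorem finite_support_of_forall_ge {A : Type*} [Zero A] {f : ℕ → A} {N : ℤ}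
    (h : ∀ i : ℕ, N ≤ i → f i = 0) : (Function.support f).Finite :=
  (Finset.range N.toNat).finite_toSet.subset fun i hi => by
    contrapose! hi
    simpa using h i (by simpa using hi)

theorem exists_finset_iSup_sup_eq_top {R M ι : Type*} [Ring R] [AddCommGroup M] [Module R M]
    {p : ι → Submodule R M} (hp : ⨆ i, p i = ⊤) (B : Submodule R M) [Module.Finite R (M ⧸ B)] :
    ∃ A : Finset ι, (⨆ i ∈ A, p i) ⊔ B = ⊤ := by
  have hcompact : IsCompactElement (⊤ : Submodule R (M ⧸ B)) :=
    (Submodule.fg_iff_compact _).mp Module.Finite.fg_top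
  have hcover : ⊤ ≤ ⨆ i, (p i).map B.mkQ := by
    rw [← Submodule.map_iSup, hp, Submodule.map_top, Submodule.range_mkQ]
  obtain ⟨A, hA⟩ := CompleteLattice.IsCompactElement.exists_finset_of_le_iSup _ hcompact _ hcover
  refine ⟨A, ?_⟩
  simp only [← Submodule.map_iSup, top_le_iff] at hA
  rw [sup_comm, ← Submodule.comap_map_mkQ, hA, Submodule.comap_top]

theorem VOA.iSup_wtSpace (V : VOA) : ⨆ n, V.wtSpace n = ⊤ :=
  eq_top_iff.mpr fun v _ => V.proj_sum v ▸ finsum_mem_of_forall_mem fun n =>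
    Submodule.mem_iSup_of_mem n (V.proj_mem n v)

namespace WeakModule

variable {V : VOA} (W : WeakModule V)

/-- The mode `uₙ` as an endomorphism of `W`. -/
def mode (u : V.carrier) (n : ℤ) : W.carrier →ₗ[ℂ] W.carrier :=
  IsLinearMap.mk' _ (W.op_linear_right u n)

/-- The linear map `u ↦ uₙ w`. -/
def modeAt (n : ℤ) (w : W.carrier) : V.carrier →ₗ[ℂ] W.carrier :=
  IsLinearMap.mk' _ (W.op_linear_left n w)

@[simp]
theorem op_zero (u : V.carrier) (n : ℤ) : W.op u n 0 = 0 := (W.mode u n).map_zero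

/-- The span of the vectors `uₙ w`; it is the submodule of `W` generated by `w`. -/
def cyclic (w : W.carrier) : Submodule ℂ W.carrier :=
  ⨆ n : ℤ, LinearMap.range (W.modeAt n w)

variable {W}

theorem op_mem_cyclic (u : V.carrier) (n : ℤ) (w : W.carrier) : W.op u n w ∈ W.cyclic w :=
  Submodule.mem_iSup_of_mem n ⟨u, rfl⟩

theorem mem_cyclic_self (w : W.carrier) : w ∈ W.cyclic w := by
  simpa [W.one_op] using op_mem_cyclic V.one (-1) w

theorem cyclic_le {w : W.carrier} {S : Submodule ℂ W.carrier} (h : ∀ u n, W.op u n w ∈ S) :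
    W.cyclic w ≤ S :=
  iSup_le fun n => LinearMap.range_le_iff_comap.mpr (eq_top_iff.mpr fun u _ => h u n)

theorem cyclic_le_of_homogeneous {w : W.carrier} {S : Submodule ℂ W.carrier}
    (h : ∀ k, ∀ u ∈ V.wtSpace k, ∀ n, W.op u n w ∈ S) : W.cyclic w ≤ S :=
  iSup_le fun n => LinearMap.range_le_iff_comap.mpr <| eq_top_iff.mpr <|
    V.iSup_wtSpace ▸ iSup_le fun k u hu => h k u hu n

theorem borcherds_of_forall_op_eq_zero (u v : V.carrier) {w : W.carrier} (l n : ℤ) {m : ℤ}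
    (hu : ∀ j : ℤ, m ≤ j → W.op u j w = 0) :
    ∑ᶠ i : ℕ, cchoose m i • W.op (V.op u (l + i) v) (m + n - i) w
      = ∑ᶠ i : ℕ, ((-1 : ℂ) ^ i * cchoose l i) • W.op u (l + m - i) (W.op v (n + i) w) := by
  rw [W.borcherds]
  exact finsum_congr fun i => by rw [hu _ (by omega), op_zero, smul_zero, sub_zero]

/-- For `m` large the Borcherds identity with `l = p - m` expresses `uₚ v_q w` through elements of
`S` and the vectors `u_{p-i} v_{q+i} w` with `i ≥ 1`. -/
theorem op_op_mem_of_forall_lt {u v : V.carrier} {w : W.carrier} {S : Submodule ℂ W.carrier}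
    (hS : ∀ x k, W.op x k w ∈ S) {q : ℤ}
    (hlt : ∀ q', q < q' → ∀ p, W.op u p (W.op v q' w) ∈ S) (p : ℤ) :
    W.op u p (W.op v q w) ∈ S := by
  obtain ⟨m, hm⟩ := W.trunc u w
  obtain ⟨N, hN⟩ := W.trunc v w
  have hsum := finsum_mem_of_forall_mem (K := S) fun i : ℕ =>
    S.smul_mem (cchoose m i) (hS (V.op u (p - m + i) v) (m + q - i))
  rw [borcherds_of_forall_op_eq_zero u v (p - m) q hm] at hsum
  have hfin : (Function.support fun i : ℕ => ((-1 : ℂ) ^ i * cchoose (p - m) i) •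
      W.op u (p - m + m - i) (W.op v (q + i) w)).Finite :=
    finite_support_of_forall_ge (N := N - q) fun i hi => by
      rw [hN _ (by omega), op_zero, smul_zero]
  simpa [cchoose_zero_right] using
    mem_of_finsum_mem hfin hsum 0 fun i hi => S.smul_mem _ (hlt _ (by omega) _)

theorem op_op_mem_cyclic (u v : V.carrier) (p q : ℤ) (w : W.carrier) :
    W.op u p (W.op v q w) ∈ W.cyclic w := by
  obtain ⟨N, hN⟩ := W.trunc v w
  have hlarge : ∀ q ≥ N, ∀ p, W.op u p (W.op v q w) ∈ W.cyclic w := fun q hq p => by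
    rw [hN q hq, op_zero]
    exact zero_mem _
  obtain hq | hq := le_total N q
  · exact hlarge q hq p
  suffices ∀ q' ≥ q, ∀ p, W.op u p (W.op v q' w) ∈ W.cyclic w from this q le_rfl p
  induction q, hq using Int.leInductionDown with
  | base => exact hlarge
  | pred q _ ih =>
    intro q' hq'
    obtain rfl | hlt := hq'.eq_or_lt
    · exact op_op_mem_of_forall_lt (fun x k => op_mem_cyclic x k w) fun r hr => ih r (by omega)
    · exact ih q' (by omega)

theorem isStable_cyclic (w : W.carrier) : W.IsStable (W.cyclic w) := fun v n _ hx =>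
  cyclic_le (S := (W.cyclic w).comap (W.mode v n)) (fun u k => op_op_mem_cyclic v u n k w) hx

theorem IsIrreducible.nontrivial (hW : W.IsIrreducible) : Nontrivial W.carrier :=
  (Submodule.nontrivial_iff ℂ).mp ⟨⊥, ⊤, hW.1⟩

theorem IsIrreducible.cyclic_eq_top (hW : W.IsIrreducible) {w : W.carrier} (hw : w ≠ 0) :
    W.cyclic w = ⊤ :=
  (hW.2 _ (isStable_cyclic w)).resolve_left fun hbot =>
    hw ((Submodule.mem_bot ℂ).mp (hbot ▸ mem_cyclic_self w))

end WeakModule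

namespace GenModule

variable {V : VOA} (W : GenModule V)

/-- The projection of `W` onto its weight space of weight `h`, as an endomorphism of `W`. -/
def projection (h : ℂ) : W.carrier →ₗ[ℂ] W.carrier := IsLinearMap.mk' _ (W.projW_linear h)

@[simp]
theorem projection_apply (h : ℂ) (w : W.carrier) : W.projection h w = W.projW h w := rfl

@[simp]
theorem projW_zero (h : ℂ) : W.projW h 0 = 0 := (W.projection h).map_zero

theorem iSup_wt : ⨆ h, W.wt h = ⊤ :=
  eq_top_iff.mpr fun w _ => W.projW_sum w ▸ finsum_mem_of_forall_mem fun h =>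
    Submodule.mem_iSup_of_mem h (W.projW_mem h w)

variable {W}

theorem op_mem_wt {k : ℤ} {u : V.carrier} (hu : u ∈ V.wtSpace k) {g h : ℂ} {n : ℤ}
    {w : W.carrier} (hw : w ∈ W.wt g) (hgh : h = g + k - n - 1) : W.op u n w ∈ W.wt h :=
  hgh ▸ W.wt_op k u hu g n w hw

theorem projW_op {k : ℤ} {u : V.carrier} (hu : u ∈ V.wtSpace k) {g h : ℂ} {n : ℤ}
    (hgh : h = g + k - n - 1) (w : W.carrier) :
    W.projW h (W.op u n w) = W.op u n (W.projW g w) := by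
  suffices hle : ⊤ ≤ LinearMap.eqLocus (W.projection h ∘ₗ W.mode u n)
      (W.mode u n ∘ₗ W.projection g) from hle (Submodule.mem_top (x := w))
  refine W.iSup_wt ▸ iSup_le fun a x hx => ?_
  change W.projW h (W.op u n x) = W.op u n (W.projW g x)
  have hux : W.op u n x ∈ W.wt (a + k - n - 1) := op_mem_wt hu hx rfl
  by_cases hag : a = g
  · rw [W.projW_eq g x (hag ▸ hx), W.projW_eq h _ (by rwa [hgh, ← hag])]
  · have hne : a + k - n - 1 ≠ h := fun heq => hag (by linear_combination heq + hgh)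
    rw [W.projW_ne a g hag x hx, W.projW_ne _ h hne _ hux, W.op_zero]

theorem mem_wt_of_op_omega_eq_smul {h : ℂ} {w : W.carrier} (hw : W.op V.omega 1 w = h • w) :
    w ∈ W.wt h := by
  have hproj : ∀ g ≠ h, W.projW g w = 0 := fun g hg => by
    have heigen : g • W.projW g w = h • W.projW g w := by
      rw [← W.wt_L0 g _ (W.projW_mem g w),
        ← projW_op V.omega_wt (h := g) (by push_cast; ring), hw]
      exact (W.projection g).map_smul h w
    rw [← sub_eq_zero, ← sub_smul] at heigen
    exact (smul_eq_zero.mp heigen).resolve_left (sub_ne_zero.mpr hg)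
  rw [← W.projW_sum w, finsum_eq_single _ h hproj]
  exact W.projW_mem h w

variable (W) in
/-- No weight of `W` lies below `h` in the coset `h + ℤ`. Here `h` itself need not be a weight. -/
def IsWeightLowerBound (h : ℂ) : Prop := ∀ m : ℤ, 0 < m → W.wt (h - m) = ⊥

theorem IsWeightLowerBound.op_eq_zero {h : ℂ} (hh : W.IsWeightLowerBound h) {k : ℤ}
    {u : V.carrier} (hu : u ∈ V.wtSpace k) {n : ℤ} (hn : k ≤ n) {w : W.carrier}
    (hw : w ∈ W.wt h) : W.op u n w = 0 := by
  rw [← Submodule.mem_bot ℂ, ← hh (n + 1 - k) (by omega)]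
  exact op_mem_wt hu hw (by push_cast; ring)

theorem IsWeightLowerBound.projW_op_eq_zero {h : ℂ} (hh : W.IsWeightLowerBound h) {k : ℤ}
    {u : V.carrier} (hu : u ∈ V.wtSpace k) {n : ℤ} (hn : n < k) {w : W.carrier}
    (hw : W.projW h w = 0) : W.projW h (W.op u n w) = 0 := by
  rw [projW_op hu (g := h - (k - n - 1 : ℤ)) (by push_cast; ring)]
  suffices hproj : W.projW (h - (k - n - 1 : ℤ)) w = 0 by rw [hproj, W.op_zero]
  obtain hpos | hzero := (show 0 ≤ k - n - 1 by omega).lt_or_eq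
  · rw [← Submodule.mem_bot ℂ, ← hh _ hpos]
    exact W.projW_mem _ w
  · simpa [← hzero] using hw

end GenModule

namespace OrdModule

variable {V : VOA} (W : OrdModule V)

instance (h : ℂ) : FiniteDimensional ℂ (W.wt h) := W.wt_fd h

theorem exists_isWeightLowerBound [Nontrivial W.carrier] :
    ∃ h, W.IsWeightLowerBound h ∧ W.wt h ≠ ⊥ := by
  obtain ⟨g, hg⟩ : ∃ g, W.wt g ≠ ⊥ := by
    by_contra! hbot
    exact bot_ne_top (W.iSup_wt ▸ (iSup_eq_bot.mpr hbot).symm)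
  obtain ⟨N, hN⟩ := W.wt_lower g
  obtain ⟨z, hz, hmin⟩ := Int.exists_least_of_bdd (P := fun m : ℤ => W.wt (g + m) ≠ ⊥)
    ⟨N, fun m hm => le_of_not_ge fun hle => hm (hN m hle)⟩ ⟨0, by simpa using hg⟩
  refine ⟨g + z, fun m hm => ?_, hz⟩
  by_contra hne
  have := hmin (z - m) (by rwa [Int.cast_sub, ← add_sub_assoc])
  omega

variable {W}

theorem eq_top_of_wt_induction {S : Submodule ℂ W.carrier}
    (hS : ∀ a, (∀ m : ℤ, 0 < m → W.wt (a - m) ≤ S) → W.wt a ≤ S) : S = ⊤ := by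
  refine eq_top_iff.mpr (W.iSup_wt ▸ iSup_le fun a => ?_)
  obtain ⟨N, hN⟩ := W.wt_lower a
  suffices h : ∀ n : ℤ, W.wt (a + n) ≤ S by simpa using h 0
  intro n
  induction n using Int.strongRec (m := N) with
  | lt n hn => simp [hN n hn.le]
  | ge n _ ih =>
    refine hS _ fun m hm => ?_
    have hlower := ih (n - m) (by omega)
    rwa [Int.cast_sub, ← add_sub_assoc] at hlower

end OrdModule

namespace IsIntertwiner

variable {V : VOA} {W1 W2 W3 : OrdModule V} {I J : W1.carrier → ℂ → W2.carrier → W3.carrier}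

/-- The linear map `w ↦ (w)ₕ y`. -/
def left (hI : IsIntertwiner W1 W2 W3 I) (h : ℂ) (y : W2.carrier) : W1.carrier →ₗ[ℂ] W3.carrier :=
  IsLinearMap.mk' _ (hI.1 h y)

/-- The linear map `y ↦ (w)ₕ y`. -/
def right (hI : IsIntertwiner W1 W2 W3 I) (w : W1.carrier) (h : ℂ) : W2.carrier →ₗ[ℂ] W3.carrier :=
  IsLinearMap.mk' _ (hI.2.1 w h)

theorem map_zero_left (hI : IsIntertwiner W1 W2 W3 I) (h : ℂ) (y : W2.carrier) : I 0 h y = 0 :=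
  (hI.left h y).map_zero

theorem map_zero_right (hI : IsIntertwiner W1 W2 W3 I) (w : W1.carrier) (h : ℂ) : I w h 0 = 0 :=
  (hI.right w h).map_zero

theorem trunc (hI : IsIntertwiner W1 W2 W3 I) (w : W1.carrier) (y : W2.carrier) (h : ℂ) :
    ∃ N : ℤ, ∀ n : ℤ, N ≤ n → I w (h + n) y = 0 :=
  hI.2.2.1 w y h

theorem op_omega_zero (hI : IsIntertwiner W1 W2 W3 I) (w : W1.carrier) (h : ℂ) (y : W2.carrier) :
    I (W1.op V.omega 0 w) h y = (-h) • I w (h - 1) y :=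
  hI.2.2.2.1 w h y

theorem jacobi (hI : IsIntertwiner W1 W2 W3 I) (u : V.carrier) (w : W1.carrier) (y : W2.carrier)
    (l m : ℤ) (h : ℂ) :
    ∑ᶠ i : ℕ, cchoose m i • I (W1.op u (l + i) w) (m + h - i) y
      = ∑ᶠ i : ℕ, ((-1 : ℂ) ^ i * cchoose l i) •
          (W3.op u (l + m - i) (I w (h + i) y)
            - ((-1 : ℂ) ^ l) • I w (l + h - i) (W2.op u (m + i) y)) :=
  hI.2.2.2.2 u w y l m h

theorem finite_support_jacobi_left (hI : IsIntertwiner W1 W2 W3 I) (u : V.carrier)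
    (w : W1.carrier) (y : W2.carrier) (l m : ℤ) (h : ℂ) :
    (Function.support fun i : ℕ =>
      cchoose m i • I (W1.op u (l + i) w) (m + h - i) y).Finite := by
  obtain ⟨N, hN⟩ := W1.trunc u w
  refine finite_support_of_forall_ge (N := N - l) fun i hi => ?_
  rw [hN _ (by omega), hI.map_zero_left, smul_zero]

theorem finite_support_jacobi_right (hI : IsIntertwiner W1 W2 W3 I) (u : V.carrier)
    (w : W1.carrier) (y : W2.carrier) (l m : ℤ) (h : ℂ) :
    (Function.support fun i : ℕ => ((-1 : ℂ) ^ i * cchoose l i) •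
      (W3.op u (l + m - i) (I w (h + i) y)
        - ((-1 : ℂ) ^ l) • I w (l + h - i) (W2.op u (m + i) y))).Finite := by
  obtain ⟨N₂, hN₂⟩ := W2.trunc u y
  obtain ⟨N, hN⟩ := hI.trunc w y h
  refine finite_support_of_forall_ge (N := max (N₂ - m) N) fun i hi => ?_
  have hIi : I w (h + i) y = 0 := mod_cast hN i ((le_max_right _ _).trans hi)
  rw [hN₂ _ (by have := (le_max_left _ _).trans hi; omega), hIi, hI.map_zero_right, W3.op_zero,
    smul_zero, sub_zero, smul_zero]

theorem zero : IsIntertwiner W1 W2 W3 0 :=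
  ⟨fun _ _ => (0 : W1.carrier →ₗ[ℂ] W3.carrier).isLinear,
    fun _ _ => (0 : W2.carrier →ₗ[ℂ] W3.carrier).isLinear,
    fun _ _ _ => ⟨0, fun _ _ => rfl⟩, by simp, by simp⟩

theorem add (hI : IsIntertwiner W1 W2 W3 I) (hJ : IsIntertwiner W1 W2 W3 J) :
    IsIntertwiner W1 W2 W3 (I + J) := by
  refine ⟨fun h y => (hI.left h y + hJ.left h y).isLinear,
    fun w h => (hI.right w h + hJ.right w h).isLinear, fun w y h => ?_, fun w h y => ?_,
    fun u w y l m h => ?_⟩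
  · obtain ⟨N, hN⟩ := hI.trunc w y h
    obtain ⟨N', hN'⟩ := hJ.trunc w y h
    refine ⟨max N N', fun n hn => ?_⟩
    simp only [Pi.add_apply, hN n ((le_max_left _ _).trans hn),
      hN' n ((le_max_right _ _).trans hn), add_zero]
  · simp only [Pi.add_apply, hI.op_omega_zero, hJ.op_omega_zero, smul_add]
  · have hop : ∀ n a b, W3.op u n (a + b) = W3.op u n a + W3.op u n b :=
      fun n => (W3.mode u n).map_add
    simp only [Pi.add_apply, smul_add, hop, add_sub_add_comm]
    rw [finsum_add_distrib (hI.finite_support_jacobi_left u w y l m h)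
        (hJ.finite_support_jacobi_left u w y l m h),
      finsum_add_distrib (hI.finite_support_jacobi_right u w y l m h)
        (hJ.finite_support_jacobi_right u w y l m h), hI.jacobi, hJ.jacobi]

theorem smul (hI : IsIntertwiner W1 W2 W3 I) (c : ℂ) : IsIntertwiner W1 W2 W3 (c • I) := by
  refine ⟨fun h y => (c • hI.left h y).isLinear, fun w h => (c • hI.right w h).isLinear,
    fun w y h => ?_, fun w h y => ?_, fun u w y l m h => ?_⟩
  · obtain ⟨N, hN⟩ := hI.trunc w y h
    exact ⟨N, fun n hn => by simp only [Pi.smul_apply, hN n hn, smul_zero]⟩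
  · simp only [Pi.smul_apply, hI.op_omega_zero, smul_comm c]
  · have hop : ∀ n a, W3.op u n (c • a) = c • W3.op u n a := fun n => (W3.mode u n).map_smul c
    simp only [Pi.smul_apply, hop, smul_comm _ c, ← smul_sub, ← smul_finsum, hI.jacobi]

theorem commutator (hI : IsIntertwiner W1 W2 W3 I) (u : V.carrier) (w : W1.carrier)
    (y : W2.carrier) (m : ℤ) (h : ℂ) :
    ∑ᶠ i : ℕ, cchoose m i • I (W1.op u i w) (m + h - i) y
      = W3.op u m (I w h y) - I w h (W2.op u m y) := by
  have hjacobi := hI.jacobi u w y 0 m h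
  simp only [zero_add] at hjacobi
  rw [hjacobi, finsum_eq_single _ 0 fun i hi => by simp [cchoose_zero_left hi]]
  simp [cchoose_zero_right]

theorem op_neg_one (hI : IsIntertwiner W1 W2 W3 I) (u : V.carrier) (w : W1.carrier)
    (y : W2.carrier) (h : ℂ) :
    I (W1.op u (-1) w) h y = ∑ᶠ i : ℕ, ((-1 : ℂ) ^ i * cchoose (-1) i) •
      (W3.op u (-1 - i) (I w (h + i) y) + I w (-1 + h - i) (W2.op u i y)) := by
  have hjacobi := hI.jacobi u w y (-1) 0 h
  rw [finsum_eq_single _ 0 fun i hi => by rw [cchoose_zero_left hi, zero_smul]] at hjacobi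
  simpa [cchoose_zero_right] using hjacobi

theorem op_omega_one (hI : IsIntertwiner W1 W2 W3 I) (w : W1.carrier) (h : ℂ) (y : W2.carrier) :
    W3.op V.omega 1 (I w h y) =
      I (W1.op V.omega 1 w) h y + I w h (W2.op V.omega 1 y) - (h + 1) • I w h y := by
  have hcomm := hI.commutator V.omega w y 1 h
  have hsupport : (Function.support fun i : ℕ =>
      cchoose 1 i • I (W1.op V.omega i w) ((1 : ℤ) + h - i) y) ⊆ Finset.range 2 := fun i hi => by
    contrapose! hi
    simp [cchoose_one_left (not_lt.mp (by simpa using hi) : 2 ≤ i)]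
  rw [finsum_eq_sum_of_support_subset _ hsupport, Finset.sum_range_succ, Finset.sum_range_one,
    cchoose_zero_right, cchoose_one_one, one_smul, one_smul, Nat.cast_zero, hI.op_omega_zero]
    at hcomm
  simp only [Int.cast_one, Nat.cast_zero, Nat.cast_one, sub_zero, add_sub_cancel_left] at hcomm
  rw [eq_add_of_sub_eq hcomm.symm]
  module

theorem apply_mem_wt (hI : IsIntertwiner W1 W2 W3 I) {a b : ℂ} {w : W1.carrier}
    (hw : w ∈ W1.wt a) {y : W2.carrier} (hy : y ∈ W2.wt b) (h : ℂ) :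
    I w h y ∈ W3.wt (a + b - h - 1) := by
  refine GenModule.mem_wt_of_op_omega_eq_smul ?_
  have hleft : I (a • w) h y = a • I w h y := (hI.left h y).map_smul a w
  have hright : I w h (b • y) = b • I w h y := (hI.right w h).map_smul b y
  rw [hI.op_omega_one, W1.wt_L0 a w hw, W2.wt_L0 b y hy, hleft, hright]
  module

/-- The subspace of those `w ∈ W₁` such that no `(w)ₕ y` with `y ∈ W₂` of weight `b` has a
component of weight `c`; applied with `b` and `c` the lowest weights of `W₂`, `W₃`. -/
def coeffKer (hI : IsIntertwiner W1 W2 W3 I) (b c : ℂ) : Submodule ℂ W1.carrier :=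
  ⨅ (h : ℂ) (y ∈ W2.wt b), LinearMap.ker (W3.projection c ∘ₗ hI.left h y)

variable {hI : IsIntertwiner W1 W2 W3 I} {b c : ℂ}

theorem mem_coeffKer {w : W1.carrier} :
    w ∈ hI.coeffKer b c ↔ ∀ h, ∀ y ∈ W2.wt b, W3.projW c (I w h y) = 0 := by
  simp only [coeffKer, Submodule.mem_iInf]
  rfl

theorem projW_apply_op_eq_zero (hb : W2.IsWeightLowerBound b) (hc : W3.IsWeightLowerBound c)
    {k : ℤ} {u : V.carrier} (hu : u ∈ V.wtSpace k) {w : W1.carrier} (hw : w ∈ hI.coeffKer b c)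
    (huw : ∀ j : ℕ, W1.op u j w ∈ hI.coeffKer b c) (n : ℤ) (h : ℂ) {y : W2.carrier}
    (hy : y ∈ W2.wt b) : W3.projW c (I w h (W2.op u n y)) = 0 := by
  obtain hn | hn := lt_or_ge n k
  · have hsum : W3.op u n (I w h y) - I w h (W2.op u n y) ∈ LinearMap.ker (W3.projection c) :=
      hI.commutator u w y n h ▸ finsum_mem_of_forall_mem fun i =>
        Submodule.smul_mem _ _ (mem_coeffKer.mp (huw i) _ y hy)
    have hop : W3.op u n (I w h y) ∈ LinearMap.ker (W3.projection c) :=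
      hc.projW_op_eq_zero hu hn (mem_coeffKer.mp hw h y hy)
    exact (Submodule.sub_mem_iff_right _ hop).mp hsum
  · rw [hb.op_eq_zero hu hn hy, hI.map_zero_right, W3.projW_zero]

theorem op_neg_one_mem_coeffKer (hb : W2.IsWeightLowerBound b) (hc : W3.IsWeightLowerBound c)
    {k : ℤ} (hk : 0 ≤ k) {u : V.carrier} (hu : u ∈ V.wtSpace k) {w : W1.carrier}
    (hw : w ∈ hI.coeffKer b c) (huw : ∀ j : ℕ, W1.op u j w ∈ hI.coeffKer b c) :
    W1.op u (-1) w ∈ hI.coeffKer b c := by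
  refine mem_coeffKer.mpr fun h y hy => ?_
  rw [hI.op_neg_one]
  refine finsum_mem_of_forall_mem (K := LinearMap.ker (W3.projection c)) fun i =>
    Submodule.smul_mem _ _ (add_mem ?_ ?_)
  · exact hc.projW_op_eq_zero hu (by omega) (mem_coeffKer.mp hw _ y hy)
  · exact projW_apply_op_eq_zero hb hc hu hw huw i _ hy

theorem op_zero_mem_coeffKer (hc : W3.IsWeightLowerBound c) {k : ℤ} {u : V.carrier}
    (hu : u ∈ V.wtSpace k) {w : W1.carrier} (hw : w ∈ hI.coeffKer b c)
    (huw : ∀ j : ℕ, j ≠ 0 → W1.op u j w ∈ hI.coeffKer b c) :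
    W1.op u 0 w ∈ hI.coeffKer b c := by
  refine mem_coeffKer.mpr fun h y hy => ?_
  have huy : W2.op u (k - 1) y ∈ W2.wt b := GenModule.op_mem_wt hu hy (by push_cast; ring)
  have hsum := hI.commutator u w y (k - 1) (h - (k - 1 : ℤ)) ▸
    sub_mem (S := Submodule ℂ W3.carrier) (H := LinearMap.ker (W3.projection c))
      (hc.projW_op_eq_zero hu (sub_one_lt k) (mem_coeffKer.mp hw _ y hy))
      (mem_coeffKer.mp hw _ _ huy)
  have hfin := hI.finite_support_jacobi_left u w y 0 (k - 1) (h - (k - 1 : ℤ))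
  simp only [zero_add] at hfin
  have hzeroth := mem_of_finsum_mem hfin hsum 0 fun i hi =>
    Submodule.smul_mem _ _ (mem_coeffKer.mp (huw i hi) _ y hy)
  simpa [cchoose_zero_right] using hzeroth

theorem projW_mem_coeffKer_of_mem_BW (hb : W2.IsWeightLowerBound b)
    (hc : W3.IsWeightLowerBound c) {a : ℂ}
    (hlower : ∀ m : ℤ, 0 < m → W1.wt (a - m) ≤ hI.coeffKer b c) {x : W1.carrier}
    (hx : x ∈ W1.BW) : W1.projW a x ∈ hI.coeffKer b c := by
  suffices hle : W1.BW ≤ (hI.coeffKer b c).comap (W1.projection a) from hle hx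
  refine Submodule.span_le.mpr ?_
  rintro _ (⟨v, hv, w, rfl⟩ | ⟨k, hk, u, hu, w, rfl⟩)
  · suffices hpos : V.pos ≤
        ((hI.coeffKer b c).comap (W1.projection a)).comap (W1.modeAt (-1) w) from hpos hv
    refine iSup₂_le fun k hk u hu => ?_
    change W1.projW a (W1.op u (-1) w) ∈ hI.coeffKer b c
    rw [GenModule.projW_op hu (g := a - k) (by push_cast; ring)]
    refine op_neg_one_mem_coeffKer hb hc (by omega) hu
      (hlower k (by omega) (W1.projW_mem _ w)) fun j => hlower (j + 1) (by omega) ?_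
    exact GenModule.op_mem_wt hu (W1.projW_mem _ w) (by push_cast; ring)
  · change W1.projW a (W1.op u 0 w) ∈ hI.coeffKer b c
    rw [GenModule.projW_op hu (g := a - (k - 1 : ℤ)) (by push_cast; ring)]
    refine op_zero_mem_coeffKer hc hu (hlower _ (by omega) (W1.projW_mem _ w))
      fun j hj => hlower j (by omega) ?_
    exact GenModule.op_mem_wt hu (W1.projW_mem _ w) (by push_cast; ring)

theorem coeffKer_eq_top (hb : W2.IsWeightLowerBound b) (hc : W3.IsWeightLowerBound c)
    {A : Set ℂ} (hA : (⨆ a ∈ A, W1.wt a) ⊔ W1.BW = ⊤)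
    (hAK : ∀ a ∈ A, W1.wt a ≤ hI.coeffKer b c) : hI.coeffKer b c = ⊤ := by
  refine OrdModule.eq_top_of_wt_induction fun a hlower => ?_
  have hle : (⨆ a ∈ A, W1.wt a) ⊔ W1.BW ≤ (hI.coeffKer b c).comap (W1.projection a) := by
    refine sup_le (iSup₂_le fun g hg x hx => ?_)
      fun x hx => projW_mem_coeffKer_of_mem_BW hb hc hlower hx
    change W1.projW a x ∈ hI.coeffKer b c
    by_cases hga : g = a
    · rw [W1.projW_eq a x (hga ▸ hx)]
      exact hAK g hg hx
    · rw [W1.projW_ne g a hga x hx]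
      exact zero_mem _
  intro w hw
  rw [← W1.projW_eq a w hw]
  exact hle (hA ▸ Submodule.mem_top)

theorem projW_apply_eq_zero (hb : W2.IsWeightLowerBound b) (hc : W3.IsWeightLowerBound c)
    (hK : hI.coeffKer b c = ⊤) {y₀ : W2.carrier} (hy₀ : y₀ ∈ W2.wt b) (hgen : W2.cyclic y₀ = ⊤)
    (w : W1.carrier) (h : ℂ) (y : W2.carrier) : W3.projW c (I w h y) = 0 := by
  have hmem : ∀ w, w ∈ hI.coeffKer b c := fun w => hK ▸ Submodule.mem_top
  have hle : W2.cyclic y₀ ≤ LinearMap.ker (W3.projection c ∘ₗ hI.right w h) :=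
    WeakModule.cyclic_le_of_homogeneous fun k u hu n =>
      projW_apply_op_eq_zero hb hc hu (hmem w) (fun j => hmem _) n h hy₀
  exact hle (hgen ▸ Submodule.mem_top)

theorem cyclic_apply_le_ker_projection (hI : IsIntertwiner W1 W2 W3 I)
    (hproj : ∀ w h y, W3.projW c (I w h y) = 0) (w : W1.carrier) (h : ℂ) (y : W2.carrier) :
    W3.cyclic (I w h y) ≤ LinearMap.ker (W3.projection c) := by
  refine WeakModule.cyclic_le fun u n => ?_
  rw [eq_add_of_sub_eq (hI.commutator u w y n h).symm]
  exact add_mem (finsum_mem_of_forall_mem fun i => Submodule.smul_mem _ _ (hproj _ _ _))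
    (hproj _ _ _)

theorem eq_zero_of_coeffKer_eq_top (hb : W2.IsWeightLowerBound b) (hc : W3.IsWeightLowerBound c)
    (hb' : W2.wt b ≠ ⊥) (hc' : W3.wt c ≠ ⊥) (hW2 : W2.IsIrreducible) (hW3 : W3.IsIrreducible)
    (hK : hI.coeffKer b c = ⊤) : I = 0 := by
  obtain ⟨y₀, hy₀, hy₀'⟩ := Submodule.exists_mem_ne_zero_of_ne_bot hb'
  obtain ⟨z₀, hz₀, hz₀'⟩ := Submodule.exists_mem_ne_zero_of_ne_bot hc'
  have hproj := projW_apply_eq_zero hb hc hK hy₀ (hW2.cyclic_eq_top hy₀')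
  funext w h y
  by_contra hne
  have hle := hI.cyclic_apply_le_ker_projection hproj w h y
  rw [hW3.cyclic_eq_top hne] at hle
  exact hz₀' (W3.projW_eq c z₀ hz₀ ▸ hle (Submodule.mem_top (x := z₀)))

end IsIntertwiner

section Fusion

variable {V : VOA}

/-- The space of intertwining operators of type `(W₃; W₁ W₂)`, whose dimension is the fusion
rule. -/
def intertwiners (W1 W2 W3 : OrdModule V) :
    Submodule ℂ (W1.carrier → ℂ → W2.carrier → W3.carrier) where
  carrier := {I | IsIntertwiner W1 W2 W3 I}
  zero_mem' := IsIntertwiner.zero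
  add_mem' := IsIntertwiner.add
  smul_mem' c _ hI := hI.smul c

theorem fusionFinite_iff {W1 W2 W3 : OrdModule V} :
    FusionFinite W1 W2 W3 ↔ FiniteDimensional ℂ (intertwiners W1 W2 W3) := by
  rw [FusionFinite, ← Submodule.span_eq (intertwiners W1 W2 W3)]
  rfl

/-- The linear map sending an intertwining operator to its matrix coefficients `(w)ₕ y` for `w`, `y`
of weights `a`, `b`; by homogeneity these have weight `c` exactly for `h = a + b - c - 1`. -/
def intertwinerCoeff (W1 W2 W3 : OrdModule V) (a b c : ℂ) :
    intertwiners W1 W2 W3 →ₗ[ℂ] W1.wt a →ₗ[ℂ] W2.wt b →ₗ[ℂ] W3.wt c where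
  toFun I := LinearMap.mk₂ ℂ
    (fun w y => ⟨I.1 w (a + b - c - 1) y, by
      convert IsIntertwiner.apply_mem_wt I.2 w.2 y.2 (a + b - c - 1) using 2; ring⟩)
    (fun w w' y => Subtype.ext ((IsIntertwiner.left I.2 _ y.1).map_add w.1 w'.1))
    (fun r w y => Subtype.ext ((IsIntertwiner.left I.2 _ y.1).map_smul r w.1))
    (fun w y y' => Subtype.ext ((IsIntertwiner.right I.2 w.1 _).map_add y.1 y'.1))
    (fun r w y => Subtype.ext ((IsIntertwiner.right I.2 w.1 _).map_smul r y.1))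
  map_add' _ _ := rfl
  map_smul' _ _ := rfl

theorem wt_le_coeffKer_of_intertwinerCoeff_eq_zero {W1 W2 W3 : OrdModule V}
    {I : intertwiners W1 W2 W3} {a b c : ℂ} (hcoeff : intertwinerCoeff W1 W2 W3 a b c I = 0) :
    W1.wt a ≤ IsIntertwiner.coeffKer I.2 b c := by
  refine fun w hw => IsIntertwiner.mem_coeffKer.mpr fun h y hy => ?_
  by_cases hc : a + b - h - 1 = c
  · have hzero : I.1 w (a + b - c - 1) y = 0 :=
      congrArg Subtype.val (LinearMap.congr_fun₂ hcoeff ⟨w, hw⟩ ⟨y, hy⟩)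
    rw [show h = a + b - c - 1 by linear_combination -hc, hzero, W3.projW_zero]
  · exact W3.projW_ne _ c hc _ (IsIntertwiner.apply_mem_wt I.2 hw hy h)

end Fusion

theorem fusion_finite_of_BW_finite_codim_general {V : VOA} (W1 W2 W3 : OrdModule V)
    (h2 : W2.toGenModule.toWeakModule.IsIrreducible)
    (h3 : W3.toGenModule.toWeakModule.IsIrreducible)
    (hB : FiniteDimensional ℂ (W1.carrier ⧸ W1.toGenModule.toWeakModule.BW)) :
    FusionFinite W1 W2 W3 := by
  have := h2.nontrivial
  have := h3.nontrivial
  obtain ⟨b, hb, hb'⟩ := W2.exists_isWeightLowerBound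
  obtain ⟨c, hc, hc'⟩ := W3.exists_isWeightLowerBound
  obtain ⟨A, hA⟩ := exists_finset_iSup_sup_eq_top W1.iSup_wt W1.BW
  refine fusionFinite_iff.mpr (FiniteDimensional.of_injective
    (V₂ := ∀ a : A, W1.wt a →ₗ[ℂ] W2.wt b →ₗ[ℂ] W3.wt c)
    (LinearMap.pi fun a : A => intertwinerCoeff W1 W2 W3 a b c) ?_)
  refine (injective_iff_map_eq_zero _).mpr fun I hI => Subtype.ext ?_
  have hK : IsIntertwiner.coeffKer I.2 b c = ⊤ :=
    IsIntertwiner.coeffKer_eq_top hb hc (A := A) hA fun a ha =>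
      wt_le_coeffKer_of_intertwinerCoeff_eq_zero (congrFun hI ⟨a, ha⟩)
  exact IsIntertwiner.eq_zero_of_coeffKer_eq_top hb hc hb' hc' h2 h3 hK

/-- Let `V = ⊕_{n∈ℕ} V₍ₙ₎` with `V₍₀₎ = ℂ1`, and let
`W₁, W₂, W₃` be irreducible `V`-modules such that `dim W₁/B(W₁) < ∞`.  Then the fusion
rule `dim I(W₃; W₁W₂)` is finite. -/
theorem fusion_finite_of_BW_finite_codim (V : VOA)
    (hneg : ∀ n : ℤ, n < 0 → V.wtSpace n = ⊥)
    (h0 : V.wtSpace 0 = Submodule.span ℂ {V.one})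
    (W1 W2 W3 : OrdModule V)
    (h1 : W1.toGenModule.toWeakModule.IsIrreducible)
    (h2 : W2.toGenModule.toWeakModule.IsIrreducible)
    (h3 : W3.toGenModule.toWeakModule.IsIrreducible)
    (hB : FiniteDimensional ℂ (W1.carrier ⧸ W1.toGenModule.toWeakModule.BW)) :
    FusionFinite W1 W2 W3 :=
  fusion_finite_of_BW_finite_codim_general W1 W2 W3 h2 h3 hB
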